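/- arXiv:1506.06817 — 2 statements merged into one kernel-verified Lean document; each statement's English description precedes it below -/
import Mathlib

section
/- In a system of n anonymous processes, any binary consensus algorithm using atomic read-write registers and satisfying nondeterministic solo termination must use Ω(n) registers; concretely, for sufficiently large n, either some execution writes to more than n/20 distinct registers outright, or an execution can be constructed in which n/20 distinct registers are written to. -/
/-!  A model of asynchronous shared memory with atomic read-write registers and
anonymous processes: all processes run the same (possibly nondeterministic /
randomized) code, given by an `Algo`. -/

/-- A shared-memory operation: read value `v` from register `r`, or write `v` to `r`. -/
inductive Op (Reg Val : Type) where
  | read  (r : Reg) (v : Val)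
  | write (r : Reg) (v : Val)

/-- The register accessed by an operation. -/
def Op.target {Reg Val : Type} : Op Reg Val → Reg
  | .read r _ => r
  | .write r _ => r

/-- An anonymous algorithm: the initial state determined by the binary input,
the initial register contents, the (possibly nondeterministic) transition
relation between local states, and the output (decision, if already returned). -/
structure Algo (Reg Val State : Type) where
  init : Bool → State
  initReg : Reg → Val
  step : State → Op Reg Val → State → Prop
  output : State → Option Bool

/-- A configuration: the state of every process and the contents of every register. -/
structure Config (Proc Reg Val State : Type) where
  pstate : Proc → State
  regs : Reg → Val

variable {Proc Reg Val State : Type}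

/-- Process `p` performs operation `o`, taking configuration `C` to `C'`:
a read must read the actual register contents, a write updates the register. -/
def Algo.Takes [DecidableEq Reg] (A : Algo Reg Val State) (C : Config Proc Reg Val State)
    (p : Proc) (o : Op Reg Val) (C' : Config Proc Reg Val State) : Prop :=
  A.step (C.pstate p) o (C'.pstate p) ∧ (∀ q, q ≠ p → C'.pstate q = C.pstate q) ∧
    match o with
    | .read r v => C.regs r = v ∧ C'.regs = C.regs
    | .write r v => C'.regs = Function.update C.regs r v

/-- `A.Exec C sched C'`: the schedule `sched` is a legal execution interval taking
configuration `C` to configuration `C'`. -/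
inductive Algo.Exec [DecidableEq Reg] (A : Algo Reg Val State) :
    Config Proc Reg Val State → List (Proc × Op Reg Val) → Config Proc Reg Val State → Prop
  | nil (C : Config Proc Reg Val State) : Algo.Exec A C [] C
  | cons {C C₁ C₂ : Config Proc Reg Val State} {p : Proc} {o : Op Reg Val}
      {l : List (Proc × Op Reg Val)} :
      A.Takes C p o C₁ → Algo.Exec A C₁ l C₂ → Algo.Exec A C ((p, o) :: l) C₂

/-- The initial configuration for given inputs. -/
def Algo.initConfig (A : Algo Reg Val State) (inputs : Proc → Bool) :
    Config Proc Reg Val State :=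
  ⟨fun p => A.init (inputs p), A.initReg⟩

/-- `C` is reachable from the initial configuration for `inputs`. -/
def Algo.Reachable [DecidableEq Reg] (A : Algo Reg Val State) (inputs : Proc → Bool)
    (C : Config Proc Reg Val State) : Prop :=
  ∃ sched, A.Exec (A.initConfig inputs) sched C

/-- The set of registers written to during `sched`. -/
def writes (sched : List (Proc × Op Reg Val)) : Set Reg :=
  {r | ∃ p v, (p, Op.write r v) ∈ sched}

/-- The list of registers written to (with multiplicity) during `sched`. -/
def writesList (sched : List (Proc × Op Reg Val)) : List Reg :=
  sched.filterMap fun s => match s.2 with | .write r _ => some r | .read _ _ => none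

/-- All steps of `sched` are taken by process `p`. -/
def Solo (p : Proc) (sched : List (Proc × Op Reg Val)) : Prop := ∀ s ∈ sched, s.1 = p

/-- Some solo execution of process `p` from `C` ends with `p` having returned `b`. -/
def SoloReturns [DecidableEq Reg] (A : Algo Reg Val State) (C : Config Proc Reg Val State)
    (p : Proc) (b : Bool) : Prop :=
  ∃ sched C', Solo p sched ∧ A.Exec C sched C' ∧ A.output (C'.pstate p) = some b

/-- Agreement: in every reachable configuration, all returned outputs are equal. -/
def Agreement [DecidableEq Reg] (A : Algo Reg Val State) (inputs : Proc → Bool) : Prop :=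
  ∀ C, A.Reachable inputs C → ∀ p q bp bq,
    A.output (C.pstate p) = some bp → A.output (C.pstate q) = some bq → bp = bq

/-- Validity: every returned output is the input of some participating process. -/
def Validity [DecidableEq Reg] (A : Algo Reg Val State) (inputs : Proc → Bool) : Prop :=
  ∀ sched C, A.Exec (A.initConfig inputs) sched C → ∀ p b,
    A.output (C.pstate p) = some b → ∃ q o, (q, o) ∈ sched ∧ inputs q = b

/-- Nondeterministic solo termination: from every reachable configuration, every
process that has not returned has a finite solo execution in which it returns. -/
def SoloTermination [DecidableEq Reg] (A : Algo Reg Val State) (inputs : Proc → Bool) : Prop :=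
  ∀ C, A.Reachable inputs C → ∀ p, A.output (C.pstate p) = none →
    ∃ sched C', Solo p sched ∧ A.Exec C sched C' ∧ (A.output (C'.pstate p)).isSome

/-- Every execution writes to at most `m` distinct registers. -/
def SpaceBound [DecidableEq Reg] (A : Algo Reg Val State) (inputs : Proc → Bool)
    (m : ℕ) : Prop :=
  ∀ sched C, A.Exec (A.initConfig inputs) sched C → (writesList sched).toFinset.card ≤ m

/-!
Call a set of processes bivalent if, running alone, it can still decide either value, and call a
register covered if some process is about to write to it. A block write to covered registers hides
from its processes whatever was written there before. By induction on its size, a bivalent set `V`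
can reach a configuration in which two of its processes are bivalent while the others cover distinct
registers. For the inductive step, some `V.erase z` becomes bivalent, and it can cover registers and
overwrite them over and over while staying bivalent. As space is bounded, the same set `L` of
registers is covered twice. Before the first block write to `L`, run `z` alone until it is about to
write outside `L`; it must get there before deciding, since otherwise the block write would hide its
decision from the bivalent set. The set `V.erase z` cannot tell, so it goes on to cover `L` again,
with `z` covering one more register. In the end the bivalent pair must itself write outside the
covered registers before deciding, or the covering processes could disagree with it.
-/

/-- No process of `P` can tell `C` from `D`: these processes have the same states and all
registers have the same contents. -/
def Indistinguishable (P : Finset Proc) (C D : Config Proc Reg Val State) : Prop :=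
  D.regs = C.regs ∧ ∀ p ∈ P, D.pstate p = C.pstate p

namespace Algo

section Executions

variable [DecidableEq Reg] {A : Algo Reg Val State} {P Q : Finset Proc}
  {C C' D E : Config Proc Reg Val State} {inputs : Proc → Bool}

theorem Exec.append {l m : List (Proc × Op Reg Val)} (h : A.Exec C l D) (h' : A.Exec D m E) :
    A.Exec C (l ++ m) E := by
  induction h with
  | nil => exact h'
  | cons t _ ih => exact .cons t (ih h')

/-- Some process of `P` takes a single step from `C` to `D`. -/
def StepBy (A : Algo Reg Val State) (P : Finset Proc) (C D : Config Proc Reg Val State) : Prop :=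
  ∃ p ∈ P, ∃ o, A.Takes C p o D

/-- A `P`-only execution leads from `C` to `D`; the schedule is forgotten. -/
def LeadsTo (A : Algo Reg Val State) (P : Finset Proc) :
    Config Proc Reg Val State → Config Proc Reg Val State → Prop :=
  Relation.ReflTransGen (A.StepBy P)

theorem leadsTo_iff_exists_exec :
    A.LeadsTo P C D ↔ ∃ l, (∀ s ∈ l, s.1 ∈ P) ∧ A.Exec C l D := by
  constructor
  · intro h
    induction h using Relation.ReflTransGen.head_induction_on with
    | refl => exact ⟨[], by simp, .nil D⟩
    | head step _ ih =>
      obtain ⟨p, hp, o, t⟩ := step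
      obtain ⟨l, hl, e⟩ := ih
      exact ⟨(p, o) :: l, List.forall_mem_cons.2 ⟨hp, hl⟩, .cons t e⟩
  · rintro ⟨l, hl, e⟩
    induction e with
    | nil => exact .refl
    | @cons _ _ _ p o _ t _ ih =>
      obtain ⟨hp, hl⟩ := List.forall_mem_cons.1 hl
      exact (ih hl).head ⟨p, hp, o, t⟩

theorem LeadsTo.mono (h : A.LeadsTo P C D) (hPQ : P ⊆ Q) : A.LeadsTo Q C D :=
  h.lift id fun _ _ ⟨p, hp, t⟩ => ⟨p, hPQ hp, t⟩

theorem LeadsTo.pstate_eq {p : Proc} (h : A.LeadsTo P C D) (hp : p ∉ P) :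
    D.pstate p = C.pstate p := by
  induction h with
  | refl => rfl
  | tail _ step ih =>
    obtain ⟨q, hq, o, -, hframe, -⟩ := step
    rw [hframe p (ne_of_mem_of_not_mem hq hp).symm, ih]

theorem Reachable.of_leadsTo (hC : A.Reachable inputs C) (h : A.LeadsTo P C D) :
    A.Reachable inputs D := by
  obtain ⟨l, e⟩ := hC
  obtain ⟨m, -, e'⟩ := leadsTo_iff_exists_exec.1 h
  exact ⟨l ++ m, e.append e'⟩

theorem Takes.exists_indistinguishable {p : Proc} {o : Op Reg Val} (t : A.Takes C p o D)
    (hp : p ∈ P) (h : Indistinguishable P C C') :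
    ∃ D', A.Takes C' p o D' ∧ Indistinguishable P D D' := by
  classical
  obtain ⟨hstep, hframe, hregs⟩ := t
  refine ⟨⟨Function.update C'.pstate p (D.pstate p), D.regs⟩, ⟨?_, ?_, ?_⟩, rfl, fun q hq => ?_⟩
  · simpa only [Function.update_self, h.2 p hp] using hstep
  · exact fun q hq => Function.update_of_ne hq _ _
  · simpa only [h.1] using hregs
  · obtain rfl | hqp := eq_or_ne q p
    · simp only [Function.update_self]
    · simp only [Function.update_of_ne hqp, h.2 q hq, hframe q hqp]

theorem LeadsTo.exists_indistinguishable (h : A.LeadsTo P C D) (hC : Indistinguishable P C C') :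
    ∃ D', A.LeadsTo P C' D' ∧ Indistinguishable P D D' := by
  induction h with
  | refl => exact ⟨C', .refl, hC⟩
  | tail _ step ih =>
    obtain ⟨p, hp, o, t⟩ := step
    obtain ⟨E, hE, hindist⟩ := ih
    obtain ⟨E', t', hindist'⟩ := t.exists_indistinguishable hp hindist
    exact ⟨E', hE.tail ⟨p, hp, o, t'⟩, hindist'⟩

theorem LeadsTo.eqOn_compl_or_exists_step_write (h : A.LeadsTo P C D) (L : Set Reg) :
    Set.EqOn D.regs C.regs Lᶜ ∨
      ∃ F, A.LeadsTo P C F ∧ Set.EqOn F.regs C.regs Lᶜ ∧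
        ∃ z ∈ P, ∃ r ∉ L, ∃ w s, A.step (F.pstate z) (.write r w) s := by
  induction h with
  | refl => exact .inl fun _ _ => rfl
  | @tail D E hD step ih =>
    refine ih.elim (fun hregs => ?_) .inr
    obtain ⟨p, hp, o, hstep, -, hop⟩ := step
    cases o with
    | read r v => exact .inl (hop.2 ▸ hregs)
    | write r v =>
      by_cases hr : r ∈ L
      · refine .inl fun r' hr' => ?_
        rw [show E.regs = _ from hop, Function.update_of_ne (ne_of_mem_of_not_mem hr hr').symm]
        exact hregs hr'
      · exact .inr ⟨D, hD, hregs, p, hp, r, hr, v, _, hstep⟩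

end Executions

section Valency

variable [DecidableEq Reg] {A : Algo Reg Val State} {P Q : Finset Proc}
  {C D : Config Proc Reg Val State} {inputs : Proc → Bool} {b c : Bool}

/-- Some `P`-only execution from `C` ends with a process of `P` having returned `b`. -/
def CanDecide (A : Algo Reg Val State) (P : Finset Proc) (C : Config Proc Reg Val State)
    (b : Bool) : Prop :=
  ∃ D, A.LeadsTo P C D ∧ ∃ p ∈ P, A.output (D.pstate p) = some b

/-- `P` is bivalent from `C`: its processes, running alone, can still decide either value. -/
def Bivalent (A : Algo Reg Val State) (P : Finset Proc) (C : Config Proc Reg Val State) : Prop :=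
  ∀ b, A.CanDecide P C b

theorem CanDecide.mono (h : A.CanDecide P C b) (hPQ : P ⊆ Q) : A.CanDecide Q C b :=
  let ⟨D, hD, p, hp, hout⟩ := h
  ⟨D, hD.mono hPQ, p, hPQ hp, hout⟩

theorem CanDecide.of_leadsTo (h : A.CanDecide P D b) (hCD : A.LeadsTo P C D) :
    A.CanDecide P C b :=
  let ⟨E, hE, hout⟩ := h
  ⟨E, hCD.trans hE, hout⟩

theorem CanDecide.congr (h : A.CanDecide P C b) (hCD : Indistinguishable P C D) :
    A.CanDecide P D b := by
  obtain ⟨E, hE, p, hp, hout⟩ := h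
  obtain ⟨E', hE', hindist⟩ := hE.exists_indistinguishable hCD
  exact ⟨E', hE', p, hp, hindist.2 p hp ▸ hout⟩

theorem Bivalent.of_canDecide (h : A.CanDecide P C b) (h' : A.CanDecide P C !b) :
    A.Bivalent P C := by
  intro c
  obtain rfl | rfl := Bool.eq_or_eq_not c b
  exacts [h, h']

theorem exists_canDecide (hS : SoloTermination A inputs) (hC : A.Reachable inputs C)
    (hP : P.Nonempty) : ∃ b, A.CanDecide P C b := by
  obtain ⟨p, hp⟩ := hP
  cases hout : A.output (C.pstate p) with
  | some b => exact ⟨b, C, .refl, p, hp, hout⟩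
  | none =>
    obtain ⟨l, D, hsolo, e, hret⟩ := hS C hC p hout
    obtain ⟨b, hb⟩ := Option.isSome_iff_exists.1 hret
    exact ⟨b, D, leadsTo_iff_exists_exec.2 ⟨l, fun s hs => hsolo s hs ▸ hp, e⟩, p, hp, hb⟩

theorem canDecide_not_of_not_canDecide (hS : SoloTermination A inputs)
    (hC : A.Reachable inputs C) (hP : P.Nonempty) (h : ¬ A.CanDecide P C b) :
    A.CanDecide P C !b := by
  obtain ⟨c, hc⟩ := exists_canDecide hS hC hP
  obtain rfl | rfl := Bool.eq_or_eq_not c b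
  exacts [absurd hc h, hc]

theorem CanDecide.eq_of_output (h : A.CanDecide P C b) (hA : Agreement A inputs)
    (hC : A.Reachable inputs C) {u : Proc} (hu : u ∉ P) (hout : A.output (C.pstate u) = some c) :
    b = c := by
  obtain ⟨D, hD, p, -, hp⟩ := h
  exact hA D (hC.of_leadsTo hD) p u b c hp (hD.pstate_eq hu ▸ hout)

theorem canDecide_singleton_initConfig (hV : Validity A inputs) (hS : SoloTermination A inputs)
    (p : Proc) : A.CanDecide {p} (A.initConfig inputs) (inputs p) := by
  obtain ⟨b, D, hD, q, hq, hout⟩ :=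
    exists_canDecide hS ⟨[], .nil _⟩ (Finset.singleton_nonempty p)
  obtain ⟨l, hl, e⟩ := leadsTo_iff_exists_exec.1 hD
  obtain ⟨q', o, hmem, rfl⟩ := hV l D e q b hout
  obtain rfl := Finset.mem_singleton.1 (hl _ hmem)
  exact ⟨D, hD, q, hq, hout⟩

theorem nonempty_reg (hV : Validity A inputs) (hS : SoloTermination A inputs) (p : Proc) :
    Nonempty Reg := by
  obtain ⟨b, D, hD, q, -, hout⟩ :=
    exists_canDecide hS ⟨[], .nil _⟩ (Finset.singleton_nonempty p)
  obtain ⟨l, -, e⟩ := leadsTo_iff_exists_exec.1 hD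
  obtain ⟨-, o, -, -⟩ := hV l D e q b hout
  exact ⟨o.target⟩

end Valency

section DropProcess

variable [DecidableEq Proc] [DecidableEq Reg] {A : Algo Reg Val State} {V : Finset Proc}
  {C : Config Proc Reg Val State} {inputs : Proc → Bool} {b : Bool}

theorem CanDecide.erase_of_forall_not_bivalent (hS : SoloTermination A inputs)
    (hC : A.Reachable inputs C) (hV : 2 < V.card) (huni : ∀ z ∈ V, ¬ A.Bivalent (V.erase z) C)
    {x y : Proc} (hx : x ∈ V) (h : A.CanDecide (V.erase x) C b) :
    A.CanDecide (V.erase y) C b := by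
  have hne : ((V.erase x).erase y).Nonempty := by
    have hx := Finset.pred_card_le_card_erase (s := V) (a := x)
    have hy := Finset.pred_card_le_card_erase (s := V.erase x) (a := y)
    exact Finset.card_pos.1 (by omega)
  by_contra hy
  have hxy : A.CanDecide ((V.erase x).erase y) C !b :=
    canDecide_not_of_not_canDecide hS hC hne fun hb =>
      hy (hb.mono (Finset.erase_subset_erase _ (Finset.erase_subset _ _)))
  exact huni x hx (.of_canDecide h (hxy.mono (Finset.erase_subset _ _)))

/-- If no `V.erase z` were bivalent, they would all share one valency, which no step of `V` could
change, whereas `V` can decide either value. -/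
theorem Bivalent.exists_erase (h : A.Bivalent V C) (hS : SoloTermination A inputs)
    (hC : A.Reachable inputs C) (hV : 2 < V.card) :
    ∃ z ∈ V, ∃ D, A.LeadsTo V C D ∧ A.Bivalent (V.erase z) D := by
  by_contra! hno
  have share {D} (hD : A.LeadsTo V C D) {b x y} (hx : x ∈ V)
      (hb : A.CanDecide (V.erase x) D b) : A.CanDecide (V.erase y) D b :=
    hb.erase_of_forall_not_bivalent hS (hC.of_leadsTo hD) hV (fun z hz => hno z hz D hD) hx
  have hall (b : Bool) (y : Proc) : A.CanDecide (V.erase y) C b := by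
    obtain ⟨E, hE, u, hu, hout⟩ := h b
    suffices ∀ D, A.LeadsTo V D E → A.LeadsTo V C D → ∀ y, A.CanDecide (V.erase y) D b from
      this C hE .refl y
    intro D hDE
    induction hDE using Relation.ReflTransGen.head_induction_on with
    | refl =>
      intro hCE y
      obtain ⟨x, hx, hxu⟩ := Finset.exists_mem_ne (by omega : 1 < V.card) u
      exact share hCE hx ⟨E, .refl, u, Finset.mem_erase.2 ⟨hxu.symm, hu⟩, hout⟩
    | head step _ ih =>
      intro hCD y
      obtain ⟨q, hq, t⟩ := step
      obtain ⟨x, hx, hxq⟩ := Finset.exists_mem_ne (by omega : 1 < V.card) q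
      have hb := ih (hCD.tail ⟨q, hq, t⟩) x
      exact share hCD hx (hb.of_leadsTo (.single ⟨q, Finset.mem_erase.2 ⟨hxq.symm, hq⟩, t⟩))
  obtain ⟨z, hz⟩ : V.Nonempty := Finset.card_pos.1 (by omega)
  exact hno z hz C .refl fun b => hall b z

end DropProcess

end Algo

theorem writesList_append (l m : List (Proc × Op Reg Val)) :
    writesList (l ++ m) = writesList l ++ writesList m :=
  List.filterMap_append

/-- A block write: each process of `procs` takes one step, in which it writes to register `reg p`
and moves to state `next p`. The value written depends on the register only, so that the outcome
does not depend on the order of the writes. -/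
structure BlockWrite (Proc Reg Val State : Type) where
  procs : Finset Proc
  reg : Proc → Reg
  val : Reg → Val
  next : Proc → State

namespace BlockWrite

section Poised

variable {A : Algo Reg Val State} {β : BlockWrite Proc Reg Val State} {P : Finset Proc}
  {C D : Config Proc Reg Val State}

/-- In `C`, every process of the block write can take its prescribed step. -/
def Poised (A : Algo Reg Val State) (β : BlockWrite Proc Reg Val State)
    (C : Config Proc Reg Val State) : Prop :=
  ∀ p ∈ β.procs, A.step (C.pstate p) (.write (β.reg p) (β.val (β.reg p))) (β.next p)

theorem Poised.congr (h : β.Poised A C) (hCD : ∀ p ∈ β.procs, D.pstate p = C.pstate p) :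
    β.Poised A D :=
  fun p hp => hCD p hp ▸ h p hp

theorem Poised.of_leadsTo [DecidableEq Reg] (h : β.Poised A C) (hCD : A.LeadsTo P C D)
    (hP : Disjoint P β.procs) : β.Poised A D :=
  h.congr fun _ hp => hCD.pstate_eq (Finset.disjoint_right.1 hP hp)

end Poised

section Apply

variable [DecidableEq Proc] [DecidableEq Reg] {A : Algo Reg Val State}
  {β : BlockWrite Proc Reg Val State} {V : Finset Proc} {C D : Config Proc Reg Val State}
  {q z : Proc} {r : Reg} {w : Val} {s : State} {o : Op Reg Val} {b : Bool}

/-- The registers covered, hence overwritten, by a block write. -/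
def regs (β : BlockWrite Proc Reg Val State) : Finset Reg :=
  β.procs.image β.reg

/-- The configuration resulting from a block write. -/
def apply (β : BlockWrite Proc Reg Val State) (C : Config Proc Reg Val State) :
    Config Proc Reg Val State :=
  ⟨fun p => if p ∈ β.procs then β.next p else C.pstate p,
    fun r => if r ∈ β.regs then β.val r else C.regs r⟩

theorem apply_eq_self (h : β.procs = ∅) : β.apply C = C := by
  simp [apply, regs, h]

theorem Poised.exists_exec_apply (h : β.Poised A C) :
    ∃ l, (∀ s ∈ l, s.1 ∈ β.procs) ∧ A.Exec C l (β.apply C) ∧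
      β.regs ⊆ (writesList l).toFinset := by
  obtain ⟨procs, reg, val, next⟩ := β
  induction procs using Finset.induction_on with
  | empty => exact ⟨[], by simp, by simpa [apply, regs] using Algo.Exec.nil C, by simp [regs]⟩
  | insert p procs hp ih =>
    obtain ⟨l, hl, e, hw⟩ := ih fun q hq => h q (Finset.mem_insert_of_mem hq)
    refine ⟨l ++ [(p, .write (reg p) (val (reg p)))], ?_,
      e.append (.cons ⟨?_, ?_, ?_⟩ (.nil _)), ?_⟩
    · simp only [List.forall_mem_append, List.forall_mem_singleton]
      exact ⟨fun s hs => Finset.mem_insert_of_mem (hl s hs), Finset.mem_insert_self _ _⟩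
    · simpa [apply, hp] using h p (Finset.mem_insert_self p procs)
    · exact fun q hq => by simp [apply, hq]
    · funext r
      by_cases hr : r = reg p <;> simp [apply, regs, hr]
    · rw [writesList_append, List.toFinset_append, regs, Finset.image_insert,
        Finset.insert_subset_iff]
      exact ⟨Finset.mem_union_right _ (by simp [writesList]), hw.trans Finset.subset_union_left⟩

theorem Poised.leadsTo_apply (h : β.Poised A C) : A.LeadsTo β.procs C (β.apply C) :=
  let ⟨l, hl, e, _⟩ := h.exists_exec_apply
  Algo.leadsTo_iff_exists_exec.2 ⟨l, hl, e⟩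

theorem indistinguishable_apply (hregs : Set.EqOn D.regs C.regs (β.regs : Set Reg)ᶜ)
    (hstate : ∀ p ∈ V, p ∉ β.procs → D.pstate p = C.pstate p) :
    Indistinguishable V (β.apply C) (β.apply D) := by
  constructor
  · funext r
    exact ite_congr rfl (fun _ => rfl) fun hr => hregs hr
  · intro p hp
    exact ite_congr rfl (fun _ => rfl) fun hpβ => hstate p hp hpβ

theorem takes_apply_of_takes_write (t : A.Takes C q (.write r w) D) (hq : q ∉ β.procs)
    (hr : r ∉ β.regs) : A.Takes (β.apply C) q (.write r w) (β.apply D) := by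
  obtain ⟨hstep, hframe, hregs⟩ := t
  refine ⟨?_, fun p hp => ?_, ?_⟩
  · simpa only [apply, if_neg hq] using hstep
  · simp only [apply, hframe p hp]
  · funext r'
    by_cases h : r' = r
    · simp [apply, show D.regs = _ from hregs, h, hr]
    · simp [apply, show D.regs = _ from hregs, h]

/-- A read, or a write that the block write obliterates, changes nothing for `β.procs`; any other
write commutes with the block write. -/
theorem canDecide_apply_of_takes (t : A.Takes C q o D) (hq : q ∉ β.procs)
    (h : A.CanDecide β.procs (β.apply D) b) :
    A.CanDecide (insert q β.procs) (β.apply C) b := by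
  have of_eqOn (hregs : Set.EqOn C.regs D.regs (β.regs : Set Reg)ᶜ) :
      A.CanDecide (insert q β.procs) (β.apply C) b :=
    (h.congr (indistinguishable_apply hregs fun p hp hp' => absurd hp hp')).mono
      (Finset.subset_insert _ _)
  cases o with
  | read r v => exact of_eqOn fun r _ => congrFun t.2.2.2.symm r
  | write r w =>
    by_cases hr : r ∈ β.regs
    · refine of_eqOn fun r' hr' => ?_
      rw [show D.regs = _ from t.2.2, Function.update_of_ne (ne_of_mem_of_not_mem hr hr').symm]
    · exact (h.mono (Finset.subset_insert _ _)).of_leadsTo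
        (.single ⟨q, Finset.mem_insert_self _ _, _, takes_apply_of_takes_write t hq hr⟩)

/-- The block write `β` extended by the write of `w` to `r` by `z`. -/
def extend (β : BlockWrite Proc Reg Val State) (z : Proc) (r : Reg) (w : Val) (s : State) :
    BlockWrite Proc Reg Val State where
  procs := insert z β.procs
  reg := Function.update β.reg z r
  val := Function.update β.val r w
  next := Function.update β.next z s

theorem regs_extend (hz : z ∉ β.procs) : (β.extend z r w s).regs = insert r β.regs := by
  simp only [regs, extend, Finset.image_insert, Function.update_self]
  congr 1
  exact Finset.image_congr fun p hp =>
    Function.update_of_ne (ne_of_mem_of_not_mem (Finset.mem_coe.1 hp) hz) _ _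

theorem Poised.extend (h : β.Poised A C) (hz : z ∉ β.procs) (hr : r ∉ β.regs)
    (hstep : A.step (C.pstate z) (.write r w) s) : (β.extend z r w s).Poised A C := by
  refine (Finset.forall_mem_insert _ _ _).2 ⟨?_, fun p hp => ?_⟩
  · simpa only [BlockWrite.extend, Function.update_self] using hstep
  · have hpr : β.reg p ≠ r := ne_of_mem_of_not_mem (Finset.mem_image_of_mem _ hp) hr
    simpa only [BlockWrite.extend, Function.update_of_ne (ne_of_mem_of_not_mem hp hz),
      Function.update_of_ne hpr] using h p hp

end Apply

section CoveredRegisters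

variable [DecidableEq Reg] {A : Algo Reg Val State} {β : BlockWrite Proc Reg Val State}
  {C : Config Proc Reg Val State} {inputs : Proc → Bool} {z : Proc} {r : Reg} {w : Val} {s : State}

theorem Poised.exists_exec_card_regs_lt (hβ : β.Poised A C) (hC : A.Reachable inputs C)
    (hz : z ∉ β.procs) (hr : r ∉ β.regs)
    (hstep : A.step (C.pstate z) (.write r w) s) :
    ∃ E D, A.Exec (A.initConfig inputs) E D ∧ β.regs.card < (writesList E).toFinset.card := by
  classical
  obtain ⟨l, e⟩ := hC
  obtain ⟨m, -, e', hw⟩ := (hβ.extend hz hr hstep).exists_exec_apply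
  refine ⟨l ++ m, _, e.append e', ?_⟩
  rw [regs_extend hz] at hw
  calc β.regs.card < (insert r β.regs).card := by simp [hr]
    _ ≤ (writesList (l ++ m)).toFinset.card := by
      rw [writesList_append, List.toFinset_append]
      exact Finset.card_le_card (hw.trans Finset.subset_union_right)

end CoveredRegisters

end BlockWrite

section Covering

variable [DecidableEq Proc] [DecidableEq Reg] {A : Algo Reg Val State}
  {β : BlockWrite Proc Reg Val State} {Q S V : Finset Proc} {C D : Config Proc Reg Val State}
  {inputs : Proc → Bool} {b : Bool}

namespace Algo

/-- Follow a `Q`-only execution that decides the value `β.procs` would not decide after the block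
write; somewhere along it, the valency of `β.procs` after the block write has to change. -/
theorem Bivalent.exists_bivalent_apply (h : A.Bivalent Q C) (hA : Agreement A inputs)
    (hS : SoloTermination A inputs) (hC : A.Reachable inputs C) (hβ : β.Poised A C)
    (hQ : Disjoint Q β.procs) :
    ∃ D, A.LeadsTo Q C D ∧ A.Bivalent (Q ∪ β.procs) (β.apply D) := by
  obtain hempty | hne := β.procs.eq_empty_or_nonempty
  · refine ⟨C, .refl, ?_⟩
    rwa [β.apply_eq_self hempty, hempty, Finset.union_empty]
  obtain ⟨b, hb⟩ := exists_canDecide hS (hC.of_leadsTo hβ.leadsTo_apply) hne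
  obtain ⟨E, hE, u, hu, hout⟩ := h !b
  clear h
  induction hE using Relation.ReflTransGen.head_induction_on with
  | refl =>
    have huβ : u ∉ β.procs := Finset.disjoint_left.1 hQ hu
    exact absurd ((hb.of_leadsTo hβ.leadsTo_apply).eq_of_output hA hC huβ hout) (by simp)
  | @head C D step _ ih =>
    have hCD : A.LeadsTo Q C D := .single step
    have hD := hC.of_leadsTo hCD
    have hβD := hβ.of_leadsTo hCD hQ
    by_cases hbD : A.CanDecide β.procs (β.apply D) b
    · obtain ⟨F, hF, hbiv⟩ := ih hD hβD hbD
      exact ⟨F, hCD.trans hF, hbiv⟩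
    · have hnot := canDecide_not_of_not_canDecide hS (hD.of_leadsTo hβD.leadsTo_apply) hne hbD
      obtain ⟨q, hq, o, t⟩ := step
      have hC_not : A.CanDecide (insert q β.procs) (β.apply C) !b :=
        BlockWrite.canDecide_apply_of_takes t (Finset.disjoint_left.1 hQ hq) hnot
      exact ⟨C, .refl, .of_canDecide (hb.mono Finset.subset_union_right) (hC_not.mono
        (Finset.insert_subset (Finset.mem_union_left _ hq) Finset.subset_union_right))⟩

/-- If the block write obliterated everything that `S` writes while deciding `b`, then `V` could
afterwards decide `!b`, violating agreement. -/
theorem CanDecide.exists_step_write_outside (h : A.CanDecide S D b) (hA : Agreement A inputs)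
    (hD : A.Reachable inputs D) (hβ : β.Poised A D) (hSV : Disjoint S V) (hβV : β.procs ⊆ V)
    (hV : A.CanDecide V (β.apply D) !b) :
    ∃ F, A.LeadsTo S D F ∧ Set.EqOn F.regs D.regs (β.regs : Set Reg)ᶜ ∧
      ∃ z ∈ S, ∃ r ∉ β.regs, ∃ w s, A.step (F.pstate z) (.write r w) s := by
  obtain ⟨F, hDF, u, hu, hout⟩ := h
  refine (hDF.eqOn_compl_or_exists_step_write (β.regs : Set Reg)).resolve_left fun hregs => ?_
  have hβF : β.Poised A F := hβ.of_leadsTo hDF (hSV.mono_right hβV)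
  have hVF : A.CanDecide V (β.apply F) !b := hV.congr <|
    BlockWrite.indistinguishable_apply hregs fun p hp _ =>
      hDF.pstate_eq (Finset.disjoint_right.1 hSV hp)
  have heq := (hVF.of_leadsTo (hβF.leadsTo_apply.mono hβV)).eq_of_output hA
    (hD.of_leadsTo hDF) (Finset.disjoint_left.1 hSV hu) hout
  exact absurd heq (by simp)

/-- In `C` the pair `Q ⊆ V` is bivalent, while the other processes of `V` are about to perform the
block write `β` to pairwise distinct registers. -/
structure BivalentCovering (A : Algo Reg Val State) (V Q : Finset Proc)
    (β : BlockWrite Proc Reg Val State) (C : Config Proc Reg Val State) : Prop where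
  subset : Q ⊆ V
  card_eq_two : Q.card = 2
  bivalent : A.Bivalent Q C
  procs_eq : β.procs = V \ Q
  poised : β.Poised A C
  card_regs : β.regs.card = β.procs.card

namespace BivalentCovering

theorem congr (h : A.BivalentCovering V Q β C) (hCD : Indistinguishable V C D) :
    A.BivalentCovering V Q β D where
  __ := h
  bivalent b := (h.bivalent b).congr ⟨hCD.1, fun p hp => hCD.2 p (h.subset hp)⟩
  poised := h.poised.congr fun p hp => hCD.2 p (Finset.sdiff_subset (h.procs_eq ▸ hp))

theorem disjoint (h : A.BivalentCovering V Q β C) : Disjoint Q β.procs :=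
  h.procs_eq ▸ Finset.disjoint_sdiff

theorem procs_subset (h : A.BivalentCovering V Q β C) : β.procs ⊆ V :=
  h.procs_eq ▸ Finset.sdiff_subset

theorem extend {z : Proc} {r : Reg} {w : Val} {s : State} (h : A.BivalentCovering V Q β C)
    (hz : z ∉ V) (hr : r ∉ β.regs) (hstep : A.step (C.pstate z) (.write r w) s) :
    A.BivalentCovering (insert z V) Q (β.extend z r w s) C where
  subset := h.subset.trans (Finset.subset_insert z V)
  card_eq_two := h.card_eq_two
  bivalent := h.bivalent
  procs_eq := by
    rw [Finset.insert_sdiff_of_notMem _ fun hQ => hz (h.subset hQ), ← h.procs_eq]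
    rfl
  poised := h.poised.extend (fun hβ => hz (h.procs_subset hβ)) hr hstep
  card_regs := by
    have hzβ : z ∉ β.procs := fun hβ => hz (h.procs_subset hβ)
    rw [BlockWrite.regs_extend hzβ, Finset.card_insert_of_notMem hr, h.card_regs,
      ← Finset.card_insert_of_notMem hzβ]
    rfl

end BivalentCovering

/-- Some `V`-only execution from `C` leads to a bivalent covering by `V`. -/
def CanCover (A : Algo Reg Val State) (V : Finset Proc) (C : Config Proc Reg Val State) : Prop :=
  ∃ Q β D, A.LeadsTo V C D ∧ A.BivalentCovering V Q β D

/-- A `V`-only execution from `C` to `D` that passes through a bivalent covering of the registers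
`L` by `V`, lets the bivalent pair run, and ends with the block write to `L`. -/
def CoveringRound (A : Algo Reg Val State) (V : Finset Proc) (C : Config Proc Reg Val State)
    (L : Finset Reg) (D : Config Proc Reg Val State) : Prop :=
  ∃ Q β E F, A.LeadsTo V C E ∧ A.BivalentCovering V Q β E ∧ β.regs = L ∧ A.LeadsTo Q E F ∧
    D = β.apply F

variable {L : Finset Reg}

theorem CoveringRound.exists_apply_eq (h : A.CoveringRound V C L D) :
    ∃ β : BlockWrite Proc Reg Val State, ∃ F,
      A.LeadsTo V C F ∧ β.procs ⊆ V ∧ β.Poised A F ∧ β.regs = L ∧ β.apply F = D := by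
  obtain ⟨Q, β, E, F, hE, hcov, rfl, hF, rfl⟩ := h
  exact ⟨β, F, hE.trans (hF.mono hcov.subset), hcov.procs_subset,
    hcov.poised.of_leadsTo hF hcov.disjoint, rfl, rfl⟩

theorem CoveringRound.leadsTo (h : A.CoveringRound V C L D) : A.LeadsTo V C D := by
  obtain ⟨β, F, hF, hβV, hβ, -, rfl⟩ := h.exists_apply_eq
  exact hF.trans (hβ.leadsTo_apply.mono hβV)

/-- An execution from the initial configuration to a configuration from which `V` is bivalent. It
records the schedule, so that the registers written so far are known. -/
structure BivalentHistory (A : Algo Reg Val State) (inputs : Proc → Bool) (V : Finset Proc) where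
  sched : List (Proc × Op Reg Val)
  config : Config Proc Reg Val State
  exec : A.Exec (A.initConfig inputs) sched config
  bivalent : A.Bivalent V config

/-- The registers written during a bivalent history. -/
def BivalentHistory.written (x : A.BivalentHistory inputs V) : Finset Reg :=
  (writesList x.sched).toFinset

theorem BivalentHistory.exists_coveringRound (hA : Agreement A inputs)
    (hS : SoloTermination A inputs)
    (hcov : ∀ C, A.Reachable inputs C → A.Bivalent V C → A.CanCover V C)
    (x : A.BivalentHistory inputs V) :
    ∃ (L : Finset Reg) (y : A.BivalentHistory inputs V),
      A.CoveringRound V x.config L y.config ∧ x.written ⊆ y.written ∧ L ⊆ y.written := by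
  have hx : A.Reachable inputs x.config := ⟨x.sched, x.exec⟩
  obtain ⟨Q, β, E, hE, hβ⟩ := hcov x.config hx x.bivalent
  obtain ⟨F, hF, hbiv⟩ :=
    hβ.bivalent.exists_bivalent_apply hA hS (hx.of_leadsTo hE) hβ.poised hβ.disjoint
  rw [hβ.procs_eq, Finset.union_sdiff_of_subset hβ.subset] at hbiv
  obtain ⟨l, -, e⟩ := leadsTo_iff_exists_exec.1 (hE.trans (hF.mono hβ.subset))
  obtain ⟨m, -, e', hm⟩ := (hβ.poised.of_leadsTo hF hβ.disjoint).exists_exec_apply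
  refine ⟨β.regs, ⟨x.sched ++ (l ++ m), β.apply F, x.exec.append (e.append e'), hbiv⟩,
    ⟨Q, β, E, F, hE, hβ, rfl, hF, rfl⟩, ?_, ?_⟩
  · simp only [written, writesList_append, List.toFinset_append, Finset.subset_union_left]
  · simp only [written, writesList_append, List.toFinset_append]
    exact hm.trans (Finset.subset_union_right.trans Finset.subset_union_right)

end Algo

end Covering

section Repetition

theorem exists_lt_eq_of_monotone_of_card_le {ι : Type*} {W L : ℕ → Finset ι} {K : ℕ}
    (hW : Monotone W) (hK : ∀ i, (W i).card ≤ K) (hL : ∀ i, L i ⊆ W (i + 1)) :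
    ∃ i j, i < j ∧ L i = L j := by
  let card : ℕ →o Fin (K + 1) :=
    ⟨fun i => ⟨(W i).card, Nat.lt_succ_of_le (hK i)⟩, fun _ _ hij => Finset.card_le_card (hW hij)⟩
  obtain ⟨N, hN⟩ := WellFoundedGT.monotone_chain_condition card
  have hstable (i : ℕ) (hi : N ≤ i) : W i = W N :=
    (Finset.eq_of_subset_of_card_le (hW hi) (Fin.ext_iff.1 (hN i hi)).ge).symm
  have hmaps : Set.MapsTo L (Set.Ici N) ((W N).powerset : Set (Finset ι)) := fun i hi =>
    Finset.mem_coe.2 (Finset.mem_powerset.2 (hstable (i + 1) (Nat.le_succ_of_le hi) ▸ hL i))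
  obtain ⟨i, -, j, -, hij, heq⟩ :=
    (Set.Ici_infinite N).exists_lt_map_eq_of_mapsTo hmaps (Finset.finite_toSet _)
  exact ⟨i, j, hij, heq⟩

theorem exists_repeated_label {α ι : Type*} {S : α → Finset ι → α → Prop} {W : α → Finset ι}
    {K : ℕ} (hK : ∀ x, (W x).card ≤ K) (hS : ∀ x, ∃ L y, S x L y ∧ W x ⊆ W y ∧ L ⊆ W y) (x₀ : α) :
    ∃ L x y x' y', Relation.ReflTransGen (fun a b => ∃ L, S a L b) x₀ x ∧ S x L y ∧
      Relation.ReflTransGen (fun a b => ∃ L, S a L b) y x' ∧ S x' L y' := by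
  choose label next hnext hmono hlabel using hS
  let x (i : ℕ) : α := next^[i] x₀
  have hx (i : ℕ) : x (i + 1) = next (x i) := Function.iterate_succ_apply' next i x₀
  have hpath {i j : ℕ} (hij : i ≤ j) :
      Relation.ReflTransGen (fun a b => ∃ L, S a L b) (x i) (x j) :=
    Nat.rel_of_forall_rel_succ_of_le _
      (fun i => .single ⟨label (x i), (hx i).symm ▸ hnext (x i)⟩) hij
  obtain ⟨i, j, hij, heq⟩ := exists_lt_eq_of_monotone_of_card_le (W := fun i => W (x i))
    (L := fun i => label (x i)) (monotone_nat_of_le_succ fun i => (hx i).symm ▸ hmono (x i))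
    (fun i => hK (x i)) (fun i => (hx i).symm ▸ hlabel (x i))
  exact ⟨label (x i), x i, next (x i), x j, next (x j), hpath i.zero_le, hnext (x i),
    hx i ▸ hpath hij, heq ▸ hnext (x j)⟩

end Repetition

namespace Algo

section LowerBound

variable [DecidableEq Proc] [DecidableEq Reg] {A : Algo Reg Val State} {V : Finset Proc}
  {C : Config Proc Reg Val State} {inputs : Proc → Bool} {K : ℕ} {z : Proc}

theorem Bivalent.exists_repeated_covering (h : A.Bivalent V C) (hA : Agreement A inputs)
    (hS : SoloTermination A inputs) (hK : SpaceBound A inputs K) (hC : A.Reachable inputs C)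
    (hcov : ∀ D, A.Reachable inputs D → A.Bivalent V D → A.CanCover V D) :
    ∃ β : BlockWrite Proc Reg Val State, ∃ F Q β' D,
      A.LeadsTo V C F ∧ β.procs ⊆ V ∧ β.Poised A F ∧ A.Bivalent V (β.apply F) ∧
      A.LeadsTo V (β.apply F) D ∧ A.BivalentCovering V Q β' D ∧ β'.regs = β.regs := by
  obtain ⟨l, e⟩ := hC
  obtain ⟨L, x, y, x', y', hx, hround, hyx', hround'⟩ := exists_repeated_label
    (S := fun x L (y : A.BivalentHistory inputs V) => A.CoveringRound V x.config L y.config)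
    (W := BivalentHistory.written) (fun x => hK x.sched x.config x.exec)
    (BivalentHistory.exists_coveringRound hA hS hcov) ⟨l, C, e, h⟩
  have leadsTo_of_rounds {x y : A.BivalentHistory inputs V}
      (hxy : Relation.ReflTransGen (fun x y => ∃ L, A.CoveringRound V x.config L y.config) x y) :
      A.LeadsTo V x.config y.config := by
    induction hxy with
    | refl => exact .refl
    | tail _ hround ih => exact ih.trans hround.choose_spec.leadsTo
  obtain ⟨β, F, hF, hβV, hβ, rfl, happly⟩ := hround.exists_apply_eq
  obtain ⟨Q, β', D, -, hD, hβ', hregs, -, -⟩ := hround'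
  exact ⟨β, F, Q, β', D, (leadsTo_of_rounds hx).trans hF, hβV, hβ, happly ▸ y.bivalent,
    happly ▸ (leadsTo_of_rounds hyx').trans hD, hβ', hregs⟩

/-- Between two coverings of the same registers, `z` can be brought to the brink of writing to
another register: the first block write hides from `V` what `z` did to get there. -/
theorem Bivalent.canCover_insert (h : A.Bivalent V C) (hA : Agreement A inputs)
    (hS : SoloTermination A inputs) (hK : SpaceBound A inputs K) (hC : A.Reachable inputs C)
    (hcov : ∀ D, A.Reachable inputs D → A.Bivalent V D → A.CanCover V D) (hz : z ∉ V) :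
    A.CanCover (insert z V) C := by
  obtain ⟨β, F, Q, β', D, hCF, hβV, hβ, hbiv, hD, hβ', hregs⟩ :=
    h.exists_repeated_covering hA hS hK hC hcov
  have hF := hC.of_leadsTo hCF
  have hzV : Disjoint {z} V := Finset.disjoint_singleton_left.2 hz
  obtain ⟨b, hb⟩ := exists_canDecide hS hF (Finset.singleton_nonempty z)
  obtain ⟨G, hFG, hG, z', hz', r, hr, w, s, hstep⟩ :=
    hb.exists_step_write_outside hA hF hβ hzV hβV (hbiv !b)
  obtain rfl := Finset.mem_singleton.1 hz'
  have hβG : β.Poised A G := hβ.of_leadsTo hFG (hzV.mono_right hβV)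
  obtain ⟨D', hD', hDD'⟩ := hD.exists_indistinguishable <|
    BlockWrite.indistinguishable_apply hG fun p hp _ =>
      hFG.pstate_eq (Finset.disjoint_right.1 hzV hp)
  have hGD' : A.LeadsTo V G D' := (hβG.leadsTo_apply.mono hβV).trans hD'
  refine ⟨Q, β'.extend z' r w s, D', ?_, (hβ'.congr hDD').extend hz (hregs ▸ hr) ?_⟩
  · exact ((hCF.mono (Finset.subset_insert _ _)).trans (hFG.mono (by simp))).trans
      (hGD'.mono (Finset.subset_insert _ _))
  · rwa [hGD'.pstate_eq hz]

theorem Bivalent.canCover [Nonempty Reg] (h : A.Bivalent V C)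
    (hA : Agreement A inputs) (hS : SoloTermination A inputs) (hK : SpaceBound A inputs K)
    (hC : A.Reachable inputs C) (hV : 2 ≤ V.card) : A.CanCover V C := by
  induction hn : V.card - 2 generalizing V C with
  | zero =>
    refine ⟨V, ⟨∅, fun _ => Classical.arbitrary Reg, C.regs, C.pstate⟩, C, .refl, ?_⟩
    exact ⟨subset_rfl, by omega, h, by simp, by simp [BlockWrite.Poised],
      by simp [BlockWrite.regs]⟩
  | succ n ih =>
    obtain ⟨z, hz, D, hD, hbiv⟩ := h.exists_erase hS hC (by omega)
    have hcard := Finset.card_erase_of_mem hz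
    obtain ⟨Q, β, E, hE, hβ⟩ := hbiv.canCover_insert hA hS hK (hC.of_leadsTo hD)
      (fun F hF hbivF => ih hbivF hF (by omega) (by omega)) (Finset.notMem_erase z V)
    rw [Finset.insert_erase hz] at hE hβ
    exact ⟨Q, β, E, hD.trans hE, hβ⟩

theorem CanDecide.exists_exec_card_regs_lt {S : Finset Proc} {β : BlockWrite Proc Reg Val State}
    {b : Bool} (h : A.CanDecide S C b) (hA : Agreement A inputs) (hC : A.Reachable inputs C)
    (hβ : β.Poised A C) (hSV : Disjoint S V) (hβV : β.procs ⊆ V)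
    (hV : A.CanDecide V (β.apply C) !b) :
    ∃ E D, A.Exec (A.initConfig inputs) E D ∧ β.regs.card < (writesList E).toFinset.card := by
  obtain ⟨F, hF, -, z, hz, r, hr, w, s, hstep⟩ :=
    h.exists_step_write_outside hA hC hβ hSV hβV hV
  exact (hβ.of_leadsTo hF (hSV.mono_right hβV)).exists_exec_card_regs_lt (hC.of_leadsTo hF)
    (fun hzβ => Finset.disjoint_left.1 hSV hz (hβV hzβ)) hr hstep

end LowerBound

theorem Bivalent.exists_exec_card_sub_one_le [DecidableEq Reg] {A : Algo Reg Val State}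
    {V : Finset Proc} {C : Config Proc Reg Val State} {inputs : Proc → Bool}
    [Nonempty Reg] (h : A.Bivalent V C) (hA : Agreement A inputs)
    (hS : SoloTermination A inputs) (hC : A.Reachable inputs C) (hV : 2 < V.card) :
    ∃ E D, A.Exec (A.initConfig inputs) E D ∧ V.card - 1 ≤ (writesList E).toFinset.card := by
  classical
  by_contra! hno
  have hK : SpaceBound A inputs V.card := fun E D e =>
    (hno E D e).le.trans (Nat.sub_le _ _)
  obtain ⟨Q, β, D, hD, hβ⟩ := h.canCover hA hS hK hC hV.le
  have hβD := hC.of_leadsTo hD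
  have hcard : β.procs.card = V.card - 2 := by
    rw [hβ.procs_eq, Finset.card_sdiff_of_subset hβ.subset, hβ.card_eq_two]
  obtain ⟨b, hb⟩ := exists_canDecide hS (hβD.of_leadsTo hβ.poised.leadsTo_apply)
    (Finset.card_pos.1 (by omega) : β.procs.Nonempty)
  obtain ⟨E, F, e, hlt⟩ := (hβ.bivalent !b).exists_exec_card_regs_lt hA hβD hβ.poised
    hβ.disjoint subset_rfl (by rwa [Bool.not_not])
  have := hno E F e
  have := hβ.card_regs
  omega

end Algo

theorem linear_space_lower_bound_general [DecidableEq Reg] (A : Algo Reg Val State)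
    (inputs : Proc → Bool) (hA : Agreement A inputs) (hV : Validity A inputs)
    (hS : SoloTermination A inputs) (P : Finset Proc) (hP : ∀ b, ∃ p ∈ P, inputs p = b) :
    ∃ E C, A.Exec (A.initConfig inputs) E C ∧ P.card - 1 ≤ (writesList E).toFinset.card := by
  classical
  obtain ⟨p, hp, hp_false⟩ := hP false
  obtain ⟨q, hq, hq_true⟩ := hP true
  have hinit : A.Reachable inputs (A.initConfig inputs) := ⟨[], .nil _⟩
  have : Nonempty Reg := Algo.nonempty_reg hV hS p
  have hp_dec := hp_false ▸ Algo.canDecide_singleton_initConfig hV hS p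
  have hq_dec := hq_true ▸ Algo.canDecide_singleton_initConfig hV hS q
  obtain hcard | hcard := Nat.lt_or_ge 2 P.card
  · have hbiv : A.Bivalent P (A.initConfig inputs) :=
      .of_canDecide (hp_dec.mono (by simpa)) (hq_dec.mono (by simpa))
    exact hbiv.exists_exec_card_sub_one_le hA hS hinit hcard
  · let β : BlockWrite Proc Reg Val State :=
      ⟨∅, fun _ => Classical.arbitrary Reg, A.initReg, (A.initConfig inputs).pstate⟩
    have hpq : Disjoint ({p} : Finset Proc) {q} := by
      rw [Finset.disjoint_singleton]
      rintro rfl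
      simp [hp_false] at hq_true
    obtain ⟨E, C, e, hlt⟩ := hp_dec.exists_exec_card_regs_lt (β := β) hA hinit
      (by simp [β, BlockWrite.Poised]) hpq (by simp [β]) (by rwa [β.apply_eq_self rfl])
    exact ⟨E, C, e, by omega⟩

/-- **Corollary.**  In a system of `n` anonymous processes, any binary
consensus algorithm satisfying nondeterministic solo termination must use `Ω(n)`
registers: for sufficiently large `n`, either some execution writes to more than
`n/20` distinct registers outright, or an execution can be constructed in which
`n/20` distinct registers are written to. -/
theorem linear_space_lower_bound :
    ∃ n₀ : ℕ, ∀ (n : ℕ), n₀ ≤ n →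
      ∀ (Reg Val State : Type) (_ : DecidableEq Reg) (A : Algo Reg Val State),
        (∀ inputs : Fin n → Bool, Agreement A inputs) →
        (∀ inputs : Fin n → Bool, Validity A inputs) →
        (∀ inputs : Fin n → Bool, SoloTermination A inputs) →
        (∃ (inputs : Fin n → Bool) (E : List (Fin n × Op Reg Val))
            (C : Config (Fin n) Reg Val State),
          A.Exec (A.initConfig inputs) E C ∧
            n / 20 < (writesList E).toFinset.card) ∨
        (∃ (inputs : Fin n → Bool) (E : List (Fin n × Op Reg Val))
            (C : Config (Fin n) Reg Val State),
          A.Exec (A.initConfig inputs) E C ∧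
            n / 20 ≤ (writesList E).toFinset.card) := by
  refine ⟨2, fun n hn Reg Val State _ A hA hV hS => .inr ?_⟩
  let inputs (i : Fin n) : Bool := decide (i.val = 1)
  have hinputs : ∀ b, ∃ i ∈ Finset.univ, inputs i = b := Bool.forall_bool.2
    ⟨⟨⟨0, by omega⟩, Finset.mem_univ _, rfl⟩, ⟨1, by omega⟩, Finset.mem_univ _, rfl⟩
  obtain ⟨E, C, e, hcard⟩ :=
    linear_space_lower_bound_general A inputs (hA inputs) (hV inputs) (hS inputs) _ hinputs
  rw [Finset.card_fin] at hcard
  exact ⟨inputs, E, C, e, by omega⟩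
end

section
/- In the inductive step of the linear lower bound construction, the reserving execution interval α must contain a write operation to a register outside R. Precisely: let C_r, U, V, L, P, Q, R = R_s ∪ R_c be as in the inductive hypothesis, let T = U \ V \ L \ P \ Q, let α ∈ Res(C_r, P) be a reserving execution interval ending with a pair of P returning 0, let γ_c be the block write to all registers of R_c by the covering processes (but not their clones) of the pairs in V, and suppose the configuration D reached after E_r γ_c is 1-valent_T^{m+1}. Then α contains a write to a register not in R. -/
variable {Proc Reg Val State : Type}

/-- Process `p` covers register `r` in configuration `C`: its next step can be a
write to `r`. -/
def Covers (A : Algo Reg Val State) (C : Config Proc Reg Val State)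
    (p : Proc) (r : Reg) : Prop :=
  ∃ v s', A.step (C.pstate p) (Op.write r v) s'

/-- `γ` is a reserving execution interval from `C` by the processes of `P`:
every step is by a process of `P`; at every point, each register written so far
during `γ` is covered by a distinct reserved process of `P`; and a process of `P`
(that had not returned) may return only in the last step of `γ`. -/
def Reserving [DecidableEq Reg] (A : Algo Reg Val State) (C : Config Proc Reg Val State)
    (P : Finset Proc) (γ : List (Proc × Op Reg Val)) : Prop :=
  (∀ s ∈ γ, s.1 ∈ P) ∧
  (∀ γ₁ γ₂ C₁, γ = γ₁ ++ γ₂ → A.Exec C γ₁ C₁ →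
    ∃ f : Reg → Proc, Set.InjOn f (writes γ₁) ∧
      ∀ r ∈ writes γ₁, f r ∈ P ∧ Covers A C₁ (f r) r) ∧
  (∀ γ₁ γ₂ C₁, γ = γ₁ ++ γ₂ → γ₂ ≠ [] → A.Exec C γ₁ C₁ →
    ∀ p ∈ P, A.output (C.pstate p) = none → A.output (C₁.pstate p) = none)

/-- `γ ∈ Res(C, P)`: `γ` is a reserving execution interval from `C` by `P` that
ends with some process of `P` having returned. -/
def InRes [DecidableEq Reg] (A : Algo Reg Val State) (C : Config Proc Reg Val State)
    (P : Finset Proc) (γ : List (Proc × Op Reg Val)) : Prop :=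
  Reserving A C P γ ∧ ∃ C', A.Exec C γ C' ∧ ∃ p ∈ P, (A.output (C'.pstate p)).isSome

/-- `γ` is a reserving execution interval from `C` by `P` (a member of `Res(C,P)`)
that ends with some process of `P` returning the value `b`. -/
def ResReturns [DecidableEq Reg] (A : Algo Reg Val State) (C : Config Proc Reg Val State)
    (P : Finset Proc) (γ : List (Proc × Op Reg Val)) (b : Bool) : Prop :=
  Reserving A C P γ ∧ ∃ C', A.Exec C γ C' ∧ ∃ p ∈ P, A.output (C'.pstate p) = some b
/-!  Process–clone pairs.  The system consists of pairs indexed by `Idx`; the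
process of pair `i` is `(i, false)` and its dedicated clone is `(i, true)`.
Both members of a pair get the same input and, while the pair is not split, the
clone performs the same operation immediately after the process, so the two stay
in identical states. -/

/-- The set of processes and clones of the pairs in `P`. -/
def pairProcs {Idx : Type} (P : Finset Idx) : Finset (Idx × Bool) :=
  P ×ˢ (Finset.univ : Finset Bool)

/-- Pair `i` is in sync (not split): process and clone are in identical states. -/
def InSync {Idx : Type} (C : Config (Idx × Bool) Reg Val State) (i : Idx) : Prop :=
  C.pstate (i, true) = C.pstate (i, false)

/-- Pair `i` is split on register `reg` with pending value `w`: the clone is one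
write behind the process, poised to perform the identical write of `w` to `reg`,
which would reunite it with the process's current state. -/
def SplitOn {Idx : Type} (A : Algo Reg Val State) (C : Config (Idx × Bool) Reg Val State)
    (i : Idx) (reg : Reg) (w : Val) : Prop :=
  ¬ InSync C i ∧ A.step (C.pstate (i, true)) (Op.write reg w) (C.pstate (i, false))

/-- Pair `i` is a fresh split pair on `reg`: it is split on `reg` and the register
still holds the written value (it has not been overwritten), so the clone is poised
to write the very value currently in the register. -/
def FreshSplitOn {Idx : Type} (A : Algo Reg Val State)
    (C : Config (Idx × Bool) Reg Val State) (i : Idx) (reg : Reg) : Prop :=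
  SplitOn A C i reg (C.regs reg)

/-- Pair `i` is a stale split pair on `reg`: it is split on `reg` but the register
has been overwritten since the process's write. -/
def StaleSplitOn {Idx : Type} (A : Algo Reg Val State)
    (C : Config (Idx × Bool) Reg Val State) (i : Idx) (reg : Reg) : Prop :=
  (∃ w, SplitOn A C i reg w) ∧ ¬ FreshSplitOn A C i reg

/-!
Suppose `α` writes only inside `R = R_s ∪ R_c`. After `α`, the clones of the fresh split pairs
restore the registers of `R_s` to their contents in `C`, and the block write `γ_c` overwrites
those of `R_c`. Every register then holds its value in `D`, so the processes of `T` cannot tell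
that `α` has happened and they return `1` as they do from `D`. But `α` has already made a process
of `P` return `0`, contradicting agreement.
-/

section Executions

variable {C C₁ D : Config Proc Reg Val State} {l l' : List (Proc × Op Reg Val)}

/-- The set of registers read during `sched`; the counterpart of `writes`. -/
def reads (sched : List (Proc × Op Reg Val)) : Set Reg :=
  {r | ∃ p v, (p, Op.read r v) ∈ sched}

theorem writes_cons (s : Proc × Op Reg Val) : writes (s :: l) = writes [s] ∪ writes l := by
  ext x
  simp only [writes, List.mem_cons, List.not_mem_nil, or_false, Set.mem_union, Set.mem_ofPred_eq,
    exists_or]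

theorem reads_cons (s : Proc × Op Reg Val) : reads (s :: l) = reads [s] ∪ reads l := by
  ext x
  simp only [reads, List.mem_cons, List.not_mem_nil, or_false, Set.mem_union, Set.mem_ofPred_eq,
    exists_or]

theorem writes_singleton_read (p : Proc) (r : Reg) (v : Val) : writes [(p, Op.read r v)] = ∅ := by
  simp [writes]

theorem writes_singleton_write (p : Proc) (r : Reg) (v : Val) :
    writes [(p, Op.write r v)] = {r} := by
  ext x
  simp [writes]

theorem reads_singleton_read (p : Proc) (r : Reg) (v : Val) : reads [(p, Op.read r v)] = {r} := by
  ext x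
  simp [reads]

variable [DecidableEq Reg] {A : Algo Reg Val State}

theorem Algo.Exec.append_s9 (h : A.Exec C l C₁) (h' : A.Exec C₁ l' D) : A.Exec C (l ++ l') D := by
  induction h with
  | nil => exact h'
  | cons hstep _ ih => exact .cons hstep (ih h')

theorem Algo.Reachable.exec {inputs : Proc → Bool} (hC : A.Reachable inputs C)
    (h : A.Exec C l D) : A.Reachable inputs D :=
  let ⟨_, hsched⟩ := hC
  ⟨_, hsched.append_s9 h⟩

theorem Algo.Exec.pstate_eq {p : Proc} (h : A.Exec C l D) (hp : ∀ s ∈ l, s.1 ≠ p) :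
    D.pstate p = C.pstate p := by
  induction h with
  | nil => rfl
  | cons hstep _ ih =>
    obtain ⟨hhead, htail⟩ := List.forall_mem_cons.1 hp
    exact (ih htail).trans (hstep.2.1 p hhead.symm)

theorem Algo.Takes.regs_eq {p : Proc} {o : Op Reg Val} {x : Reg} (h : A.Takes C p o D)
    (hx : x ∉ writes [(p, o)]) : D.regs x = C.regs x := by
  obtain ⟨-, -, hregs⟩ := h
  cases o with
  | read r v => rw [hregs.2]
  | write r v =>
    rw [writes_singleton_write] at hx
    rw [hregs, Function.update_of_ne hx]

theorem Algo.Exec.regs_eq {x : Reg} (h : A.Exec C l D) (hx : x ∉ writes l) :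
    D.regs x = C.regs x := by
  induction h with
  | nil => rfl
  | cons hstep _ ih =>
    rw [writes_cons] at hx
    exact (ih fun h => hx (.inr h)).trans (hstep.regs_eq fun h => hx (.inl h))

theorem Agreement.eq_of_exec {inputs : Proc → Bool} (hA : Agreement A inputs)
    (hC : A.Reachable inputs C) (h : A.Exec C l D) {p q : Proc} {b c : Bool}
    (hp : ∀ s ∈ l, s.1 ≠ p) (hb : A.output (C.pstate p) = some b)
    (hc : A.output (D.pstate q) = some c) : b = c :=
  hA D (hC.exec h) p q b c (by rwa [h.pstate_eq hp]) hc

end Executions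

section Indistinguishability

variable {C C' D : Config Proc Reg Val State} {S S' : Set Proc} {X X' : Set Reg}
  {l : List (Proc × Op Reg Val)}

/-- Indistinguishability of two configurations, relativized to the processes in `S` and to the
registers in `X`. The set `X` is explicit so that one can keep track of which registers have
already been made equal. -/
def Config.IndistinguishableOn (C C' : Config Proc Reg Val State) (S : Set Proc) (X : Set Reg) :
    Prop :=
  Set.EqOn C'.pstate C.pstate S ∧ Set.EqOn C'.regs C.regs X

theorem Config.IndistinguishableOn.mono (h : C.IndistinguishableOn C' S X) (hS : S' ⊆ S)
    (hX : X' ⊆ X) : C.IndistinguishableOn C' S' X' :=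
  ⟨h.1.mono hS, h.2.mono hX⟩

variable [DecidableEq Reg] {A : Algo Reg Val State}

theorem Algo.Takes.exists_takes_of_indistinguishableOn {p : Proc} {o : Op Reg Val}
    (h : A.Takes C p o D) (hC : C.IndistinguishableOn C' S X) (hp : p ∈ S)
    (hreads : reads [(p, o)] ⊆ X) :
    ∃ D', A.Takes C' p o D' ∧ D.IndistinguishableOn D' S (X ∪ writes [(p, o)]) := by
  classical
  obtain ⟨hstep, hother, hregs⟩ := h
  obtain ⟨hS, hX⟩ := hC
  rw [← hS hp] at hstep
  have hpstate : Set.EqOn (Function.update C'.pstate p (D.pstate p)) D.pstate S := by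
    intro q hq
    obtain rfl | hqp := eq_or_ne q p
    · exact Function.update_self ..
    · rw [Function.update_of_ne hqp, hS hq, hother q hqp]
  cases o with
  | read r v =>
    obtain ⟨hv, hregs⟩ := hregs
    refine ⟨⟨Function.update C'.pstate p (D.pstate p), C'.regs⟩,
      ⟨by simpa using hstep, fun q hq => Function.update_of_ne hq .., ?_, rfl⟩, hpstate, ?_⟩
    · rw [reads_singleton_read, Set.singleton_subset_iff] at hreads
      exact (hX hreads).trans hv
    · simpa [writes_singleton_read, hregs] using hX
  | write r v =>
    refine ⟨⟨Function.update C'.pstate p (D.pstate p), Function.update C'.regs r v⟩,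
      ⟨by simpa using hstep, fun q hq => Function.update_of_ne hq .., rfl⟩, hpstate, ?_⟩
    rintro x hx
    rw [writes_singleton_write] at hx
    change Function.update C'.regs r v x = D.regs x
    obtain rfl | hxr := eq_or_ne x r
    · rw [hregs, Function.update_self, Function.update_self]
    · rw [hregs, Function.update_of_ne hxr, Function.update_of_ne hxr, hX (hx.resolve_right hxr)]

theorem Algo.Exec.exists_exec_of_indistinguishableOn (h : A.Exec C l D)
    (hC : C.IndistinguishableOn C' S X) (hl : ∀ s ∈ l, s.1 ∈ S) (hreads : reads l ⊆ X) :
    ∃ D', A.Exec C' l D' ∧ D.IndistinguishableOn D' S (X ∪ writes l) := by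
  induction h generalizing C' X with
  | nil => exact ⟨C', .nil C', by simpa [writes] using hC⟩
  | @cons C C₁ D p o l hstep _ ih =>
    obtain ⟨hp, hl⟩ := List.forall_mem_cons.1 hl
    rw [reads_cons, Set.union_subset_iff] at hreads
    obtain ⟨C₁', hstep', hC₁⟩ := hstep.exists_takes_of_indistinguishableOn hC hp hreads.1
    obtain ⟨D', h', hD⟩ := ih hC₁ hl (hreads.2.trans Set.subset_union_left)
    refine ⟨D', .cons hstep' h', ?_⟩
    rwa [writes_cons, ← Set.union_assoc]

/-- From `C`, the processes of `S` can run `γ`, after which one of them has returned `b`: what is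
left of `ResReturns` when the interval need not be reserving. -/
def Algo.Returns (A : Algo Reg Val State) (C : Config Proc Reg Val State) (S : Set Proc)
    (γ : List (Proc × Op Reg Val)) (b : Bool) : Prop :=
  (∀ s ∈ γ, s.1 ∈ S) ∧ ∃ D, A.Exec C γ D ∧ ∃ p ∈ S, A.output (D.pstate p) = some b

theorem ResReturns.returns {P : Finset Proc} {b : Bool} (h : ResReturns A C P l b) :
    A.Returns C P l b :=
  ⟨h.1.1, h.2⟩

theorem Algo.Returns.of_indistinguishableOn {b : Bool} (h : A.Returns C S l b)
    (hC : C.IndistinguishableOn C' S Set.univ) : A.Returns C' S l b := by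
  obtain ⟨hl, D, hD, p, hp, hb⟩ := h
  obtain ⟨D', hD', hDD'⟩ := hD.exists_exec_of_indistinguishableOn hC hl (Set.subset_univ _)
  exact ⟨hl, D', hD', p, hp, by rwa [hDD'.1 hp]⟩

end Indistinguishability

section BlockWrites

variable {C C₁ D : Config Proc Reg Val State}

/-- The block write in which, for each `x` in `l` in turn, process `u x` writes `w x` to `x`. -/
def blockWrite (u : Reg → Proc) (w : Reg → Val) (l : List Reg) : List (Proc × Op Reg Val) :=
  l.map fun x => (u x, Op.write x (w x))

variable {u : Reg → Proc} {w : Reg → Val} {l : List Reg}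

theorem mem_blockWrite {s : Proc × Op Reg Val} :
    s ∈ blockWrite u w l ↔ ∃ x ∈ l, (u x, Op.write x (w x)) = s :=
  List.mem_map

theorem writes_blockWrite : writes (blockWrite u w l) = {x | x ∈ l} := by
  ext x
  simp [writes, mem_blockWrite]

theorem reads_blockWrite : reads (blockWrite u w l) = ∅ := by
  simp [reads, mem_blockWrite]

variable [DecidableEq Reg] {A : Algo Reg Val State}

theorem Algo.exists_exec_blockWrite (hl : (l.map u).Nodup)
    (hpending : ∀ x ∈ l, ∃ s, A.step (C.pstate (u x)) (.write x (w x)) s) :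
    ∃ D, A.Exec C (blockWrite u w l) D := by
  classical
  induction l generalizing C with
  | nil => exact ⟨C, .nil C⟩
  | cons a l ih =>
    obtain ⟨hua, hl⟩ := List.nodup_cons.1 hl
    obtain ⟨⟨s, hs⟩, hpending⟩ := List.forall_mem_cons.1 hpending
    let C₁ : Config Proc Reg Val State :=
      ⟨Function.update C.pstate (u a) s, Function.update C.regs a (w a)⟩
    have hstep : A.Takes C (u a) (.write a (w a)) C₁ :=
      ⟨by simpa [C₁] using hs, fun q hq => Function.update_of_ne hq .., rfl⟩
    have hpending₁ : ∀ x ∈ l, ∃ s, A.step (C₁.pstate (u x)) (.write x (w x)) s := by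
      intro x hx
      have hne : u x ≠ u a := fun h => hua (h ▸ List.mem_map_of_mem hx)
      rw [hstep.2.1 _ hne]
      exact hpending x hx
    obtain ⟨D, hD⟩ := ih hl hpending₁
    exact ⟨D, .cons hstep hD⟩

theorem Algo.Exec.regs_blockWrite (h : A.Exec C (blockWrite u w l) D) :
    ∀ x ∈ l, D.regs x = w x := by
  induction l generalizing C with
  | nil => exact fun x hx => absurd hx List.not_mem_nil
  | cons a l ih =>
    obtain _ | ⟨hstep, hl⟩ := h
    intro x hx
    by_cases hxl : x ∈ l
    · exact ih hl x hxl
    · obtain rfl := (List.mem_cons.1 hx).resolve_right hxl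
      have hx_last : x ∉ writes (blockWrite u w l) := by rwa [writes_blockWrite]
      rw [hl.regs_eq hx_last, hstep.2.2, Function.update_self]

theorem Algo.Exec.exists_exec_blockWrite_restoring {S : Set Proc} {α : List (Proc × Op Reg Val)}
    {R : Finset Reg} (hα : A.Exec C α C₁) (hαS : ∀ s ∈ α, s.1 ∈ S) (hu : Set.InjOn u R)
    (huS : ∀ x ∈ R, u x ∉ S)
    (hpending : ∀ x ∈ R, ∃ s, A.step (C.pstate (u x)) (.write x (C.regs x)) s) :
    ∃ C₂, A.Exec C₁ (blockWrite u C.regs R.toList) C₂ ∧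
      C.IndistinguishableOn C₂ (S ∪ u '' R)ᶜ (writes α \ R)ᶜ := by
  have hα_pstate {p : Proc} (hp : p ∉ S) : C₁.pstate p = C.pstate p :=
    hα.pstate_eq fun s hs h => hp (h ▸ hαS s hs)
  obtain ⟨C₂, hC₂⟩ : ∃ C₂, A.Exec C₁ (blockWrite u C.regs R.toList) C₂ := by
    refine Algo.exists_exec_blockWrite (R.nodup_toList.map_on ?_) ?_
    · simpa [Set.InjOn] using hu
    · intro x hx
      rw [Finset.mem_toList] at hx
      rw [hα_pstate (huS x hx)]
      exact hpending x hx
  refine ⟨C₂, hC₂, fun p hp => ?_, fun x hx => ?_⟩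
  · rw [Set.mem_compl_iff, Set.mem_union, not_or] at hp
    have hne : ∀ s ∈ blockWrite u C.regs R.toList, s.1 ≠ p := by
      rintro _ hs rfl
      obtain ⟨x, hx, rfl⟩ := mem_blockWrite.1 hs
      exact hp.2 ⟨x, Finset.mem_toList.1 hx, rfl⟩
    exact (hC₂.pstate_eq hne).trans (hα_pstate hp.1)
  · by_cases hxR : x ∈ R
    · exact hC₂.regs_blockWrite x (Finset.mem_toList.2 hxR)
    · have hxα : x ∉ writes α := fun h => hx ⟨h, hxR⟩
      rw [hC₂.regs_eq (by simpa [writes_blockWrite] using hxR), hα.regs_eq hxα]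

theorem Algo.Returns.exists_exec_of_writes_subset {S T : Set Proc}
    {α β γ : List (Proc × Op Reg Val)} {R : Finset Reg} {b : Bool} (hγ : A.Returns D T γ b)
    (hα : A.Exec C α C₁) (hβ : A.Exec C β D) (hu : Set.InjOn u R)
    (hpending : ∀ x ∈ R, ∃ s, A.step (C.pstate (u x)) (.write x (C.regs x)) s)
    (hαS : ∀ s ∈ α, s.1 ∈ S) (huS : ∀ x ∈ R, u x ∉ S) (hβN : ∀ s ∈ β, s.1 ∈ (S ∪ u '' R)ᶜ)
    (hTN : T ⊆ (S ∪ u '' R)ᶜ) (hreads : Disjoint (reads β) (writes α \ R))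
    (hwrites : writes α ⊆ R ∪ writes β) :
    ∃ δ F, A.Exec C₁ δ F ∧ (∀ s ∈ δ, s.1 ∉ S) ∧ ∃ p, A.output (F.pstate p) = some b := by
  obtain ⟨C₂, hC₂, hCC₂⟩ := hα.exists_exec_blockWrite_restoring hαS hu huS hpending
  obtain ⟨C₃, hC₃, hDC₃⟩ := hβ.exists_exec_of_indistinguishableOn hCC₂ hβN
    hreads.subset_compl_right
  have hregs : (Set.univ : Set Reg) ⊆ (writes α \ R)ᶜ ∪ writes β := by
    refine (Set.compl_subset_iff_union.1 ?_).ge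
    rw [compl_compl]
    exact Set.sdiff_subset_iff.2 hwrites
  obtain ⟨hγT, F, hF, p, -, hb⟩ := hγ.of_indistinguishableOn (hDC₃.mono hTN hregs)
  refine ⟨_, F, hC₂.append_s9 (hC₃.append_s9 hF), ?_, p, hb⟩
  simp only [List.mem_append]
  rintro s (hs | hs | hs)
  · obtain ⟨x, hx, rfl⟩ := mem_blockWrite.1 hs
    exact huS x (Finset.mem_toList.1 hx)
  · exact fun h => hβN s hs (.inl h)
  · exact fun h => hTN (hγT s hs) (.inl h)

end BlockWrites

theorem mem_pairProcs {Idx : Type} {P : Finset Idx} {p : Idx × Bool} :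
    p ∈ pairProcs P ↔ p.1 ∈ P := by
  simp [pairProcs]

theorem alpha_writes_outside_R_general {Idx Reg Val State : Type} [DecidableEq Idx]
    [DecidableEq Reg] {A : Algo Reg Val State} {inputs : Idx × Bool → Bool}
    (hAgree : Agreement A inputs) {C D : Config (Idx × Bool) Reg Val State}
    (hC : A.Reachable inputs C) {Rs Rc : Finset Reg} {v : Reg → Idx}
    (hv : Set.InjOn v Rs) (hRs : ∀ x ∈ Rs, FreshSplitOn A C (v x) x) {P T : Finset Idx}
    (hPV : Disjoint P ((Rs ∪ Rc).image v)) (hTV : Disjoint T (Rs.image v)) (hPT : Disjoint P T)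
    {α γ : List ((Idx × Bool) × Op Reg Val)} {b c : Bool} (hbc : b ≠ c)
    (hα : A.Returns C (pairProcs P) α b) {w : Reg → Val} {l : List Reg} (hl : l.toFinset = Rc)
    (hD : A.Exec C (blockWrite (fun x => (v x, false)) w l) D)
    (hγ : A.Returns D (pairProcs T) γ c) :
    ∃ s ∈ α, ∃ x w', s.2 = Op.write x w' ∧ x ∉ Rs ∪ Rc := by
  by_contra! hcon
  obtain ⟨hαP, C₁, hC₁, p, hp, hb⟩ := hα
  let clone : Reg → Idx × Bool := fun x => (v x, true)
  have hclone : Set.InjOn clone Rs := fun x hx y hy h => hv hx hy (congrArg Prod.fst h)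
  have hwrites : writes α ⊆ Rs ∪ {x | x ∈ l} := by
    rintro x ⟨q, w', hmem⟩
    simpa [← hl] using hcon _ hmem x w' rfl
  have hVP : ∀ x ∈ Rs ∪ Rc, ∀ j, (v x, j) ∉ pairProcs P := fun x hx j hP =>
    Finset.disjoint_left.1 hPV (mem_pairProcs.1 hP) (Finset.mem_image_of_mem v hx)
  have hγc : ∀ s ∈ blockWrite (fun x => (v x, false)) w l,
      s.1 ∈ (pairProcs P ∪ clone '' Rs : Set (Idx × Bool))ᶜ := by
    intro s hs
    obtain ⟨x, hx, rfl⟩ := mem_blockWrite.1 hs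
    simpa [clone] using hVP x (by simp [← hl, hx]) false
  have hT : (pairProcs T : Set (Idx × Bool)) ⊆ (pairProcs P ∪ clone '' Rs)ᶜ := by
    rintro _ hi (hP | ⟨x, hx, rfl⟩)
    · exact Finset.disjoint_left.1 hPT (mem_pairProcs.1 hP) (mem_pairProcs.1 hi)
    · exact Finset.disjoint_left.1 hTV (mem_pairProcs.1 hi) (Finset.mem_image_of_mem v hx)
  obtain ⟨δ, F, hF, hδ, q, hc⟩ := hγ.exists_exec_of_writes_subset hC₁ hD hclone
    (fun x hx => ⟨_, (hRs x hx).2⟩) hαP (fun x hx => hVP x (Finset.mem_union_left _ hx) true)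
    hγc hT (by simp [reads_blockWrite]) (by rwa [writes_blockWrite])
  exact hbc (hAgree.eq_of_exec (hC.exec hC₁) hF (fun s hs h => hδ s hs (h ▸ hp)) hb hc)

/-- **Claim 4.**  In the inductive step of the linear lower bound, with
`C_r`, `V`, `L`, `P`, `Q`, `R = R_s ∪ R_c` as in the inductive hypothesis,
`T = U \ V \ L \ P \ Q`, `α ∈ Res(C_r, P)` a reserving interval ending with a pair of
`P` returning `0`, `γ_c` the block write to all registers of `R_c` by the covering
processes (but not their clones) of the pairs of `V`, and the configuration `D`
reached after `E_r γ_c` being `1`-valent w.r.t. `T` (in the `{}^{m+1}` sense), the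
interval `α` must contain a write to a register outside `R`. -/
theorem alpha_writes_outside_R {Reg Val State : Type} [DecidableEq Reg]
    (m r : ℕ) (hr : r ≤ m) (A : Algo Reg Val State)
    (ipt : Fin (5*m+6+2*r) → Bool)
    (hAgree : Agreement A (fun p : Fin (5*m+6+2*r) × Bool => ipt p.1))
    (hValid : Validity A (fun p : Fin (5*m+6+2*r) × Bool => ipt p.1))
    (hTerm : SoloTermination A (fun p : Fin (5*m+6+2*r) × Bool => ipt p.1))
    (hSpace : SpaceBound A (fun p : Fin (5*m+6+2*r) × Bool => ipt p.1) m)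
    -- the inductive configuration `C_r`, reached by `E_r`
    (E : List ((Fin (5*m+6+2*r) × Bool) × Op Reg Val))
    (C : Config (Fin (5*m+6+2*r) × Bool) Reg Val State)
    (hE : A.Exec (A.initConfig fun p => ipt p.1) E C)
    -- property 1 of the inductive hypothesis
    (Rs Rc : Finset Reg) (vfun : Reg → Fin (5*m+6+2*r))
    (hdisj : Disjoint Rs Rc) (hcard : (Rs ∪ Rc).card = r)
    (hinj : Set.InjOn vfun ↑(Rs ∪ Rc))
    (hRs : ∀ reg ∈ Rs, FreshSplitOn A C (vfun reg) reg)
    (hRsAll : ∀ reg : Reg, (∃ i, FreshSplitOn A C i reg) → reg ∈ Rs)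
    (hRc : ∀ reg ∈ Rc, InSync C (vfun reg) ∧
      Covers A C ((vfun reg, false) : Fin (5*m+6+2*r) × Bool) reg ∧
      Covers A C ((vfun reg, true) : Fin (5*m+6+2*r) × Bool) reg)
    -- property 2 of the inductive hypothesis
    (L : Finset (Fin (5*m+6+2*r))) (lreg : Fin (5*m+6+2*r) → Reg)
    (hL : L.card ≤ r) (hlinj : Set.InjOn lreg ↑L)
    (hLsplit : ∀ i ∈ L, lreg i ∈ Rs ∪ Rc ∧ StaleSplitOn A C i (lreg i))
    (hLall : ∀ i reg, StaleSplitOn A C i reg → i ∈ L)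
    -- property 3 of the inductive hypothesis
    (P Q : Finset (Fin (5*m+6+2*r)))
    (hPQ : Disjoint P Q)
    (hPQVL : Disjoint (P ∪ Q) ((Rs ∪ Rc).image vfun ∪ L))
    (hsync : ∀ i ∈ P ∪ Q, InSync C i)
    (hPQcard : P.card + Q.card ≤ 2*m+4)
    -- the reserving execution interval `α` returning `0`
    (α : List ((Fin (5*m+6+2*r) × Bool) × Op Reg Val))
    (hα : ResReturns A C (pairProcs P) α false)
    -- some reserving execution interval `β ∈ Res(C_r, Q)` returns `1`
    (β : List ((Fin (5*m+6+2*r) × Bool) × Op Reg Val))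
    (hβ : ResReturns A C (pairProcs Q) β true)
    -- the block write `γ_c` to `R_c` by the covering processes (not the clones)
    (γc : List ((Fin (5*m+6+2*r) × Bool) × Op Reg Val))
    (lc : List Reg) (wval : Reg → Val)
    (hlc : lc.Nodup) (hlcR : lc.toFinset = Rc)
    (hγc : γc = lc.map fun reg => (((vfun reg, false) : Fin (5*m+6+2*r) × Bool),
      Op.write reg (wval reg)))
    -- the configuration `D` after `E_r γ_c` is `1`-valent w.r.t. `T`
    (D : Config (Fin (5*m+6+2*r) × Bool) Reg Val State)
    (hD : A.Exec C γc D)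
    (hDval : ∃ T' : Finset (Fin (5*m+6+2*r)),
      T' ⊆ Finset.univ \ ((Rs ∪ Rc).image vfun ∪ L ∪ P ∪ Q) ∧ T'.card = m + 1 ∧
      ∃ γ, ResReturns A D (pairProcs T') γ true) :
    ∃ s ∈ α, ∃ reg v, s.2 = Op.write reg v ∧ reg ∉ Rs ∪ Rc := by
  obtain ⟨T, hT, -, γ, hγ⟩ := hDval
  have hTdisj := (Finset.subset_sdiff.1 hT).2
  subst hγc
  exact alpha_writes_outside_R_general hAgree ⟨E, hE⟩ (hinj.mono (by simp)) hRs
    (hPQVL.mono Finset.subset_union_left Finset.subset_union_left)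
    (hTdisj.mono_right (by grind)) (hTdisj.mono_right (by grind)).symm
    Bool.false_ne_true hα.returns hlcR hD hγ.returns
end
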